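/- Fix n ≥ 6 and let H_n be the graph on [n] obtained from the anticycle on n vertices by removing the edges {n−2, n} and {1, n−1} and adding the edge {1, n}. Then I_{H_n}^2 has linear quotients. -/

import Mathlib

open MvPolynomial

noncomputable section

/-- The edge ideal of a finite simple graph on vertex set `Fin n`
(vertex with index `v` corresponds to the vertex `v+1` of `[n]`). -/
def edgeIdeal (K : Type*) [Field K] {n : ℕ} (G : SimpleGraph (Fin n)) :
    Ideal (MvPolynomial (Fin n) K) :=
  Ideal.span {p | ∃ i j : Fin n, G.Adj i j ∧ p = X i * X j}

/-- `d` is the exponent vector of a minimal monomial generator of `I`. -/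
def IsMinGen {K : Type*} [Field K] {n : ℕ} (I : Ideal (MvPolynomial (Fin n) K))
    (d : Fin n →₀ ℕ) : Prop :=
  monomial d (1 : K) ∈ I ∧
    ∀ e : Fin n →₀ ℕ, e ≤ d → e ≠ d → monomial e (1 : K) ∉ I

/-- A list of exponent vectors `L = [d_1, …, d_r]` is a linear quotient ordering if
for every `i ≥ 2` the colon ideal `(x^{d_1}, …, x^{d_{i-1}}) : x^{d_i}` is generated
by a subset of the variables. -/
def IsLinQuotOrder (K : Type*) [Field K] {n : ℕ} (L : List (Fin n →₀ ℕ)) : Prop :=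
  ∀ i : Fin L.length, 0 < i.val →
    ∃ V : Set (Fin n),
      Submodule.colon
        (Ideal.span {m : MvPolynomial (Fin n) K |
          ∃ k : Fin L.length, k.val < i.val ∧ m = monomial (L.get k) 1})
        (Ideal.span {monomial (L.get i) (1 : K)}) =
      Ideal.span ((fun v : Fin n => (X v : MvPolynomial (Fin n) K)) '' V)

/-- A monomial ideal has linear quotients if it is principal or admits a
linear quotient ordering of its minimal monomial generators. -/
def HasLinearQuotients {K : Type*} [Field K] {n : ℕ}
    (I : Ideal (MvPolynomial (Fin n) K)) : Prop :=
  (∃ p, I = Ideal.span {p}) ∨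
    ∃ L : List (Fin n →₀ ℕ), L.Nodup ∧ (∀ d, d ∈ L ↔ IsMinGen I d) ∧ IsLinQuotOrder K L

/-- `lexLt d e` : the monomial `x^d` is lexicographically smaller than `x^e`
for the lexicographic order induced by `x_n > x_{n-1} > … > x_1`. -/
def lexLt {n : ℕ} (d e : Fin n →₀ ℕ) : Prop :=
  ∃ k : Fin n, d k < e k ∧ ∀ m : Fin n, k < m → d m = e m

/-- `L` lists the minimal monomial generators of `I` in decreasing lexicographic order. -/
def LexDecMinGenOrder {K : Type*} [Field K] {n : ℕ} (I : Ideal (MvPolynomial (Fin n) K))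
    (L : List (Fin n →₀ ℕ)) : Prop :=
  List.Pairwise (fun d e => lexLt e d) L ∧ ∀ d, d ∈ L ↔ IsMinGen I d

/-- The anticycle on `[m]` : `{i,j}` is an edge iff `i ≠ j` and `i - j ≢ ±1 (mod m)`. -/
def anticycle (m : ℕ) : SimpleGraph (Fin m) where
  Adj i j := i ≠ j ∧ (i.val + 1) % m ≠ j.val ∧ (j.val + 1) % m ≠ i.val
  symm := ⟨fun i j h => ⟨h.1.symm, h.2.2, h.2.1⟩⟩
  loopless := ⟨fun i h => h.1 rfl⟩

/-- The anticycle on `[m]` regarded as a graph on the vertex set `[n]`. -/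
def anticycleIn (n m : ℕ) : SimpleGraph (Fin n) where
  Adj i j := i ≠ j ∧ i.val < m ∧ j.val < m ∧ (i.val + 1) % m ≠ j.val ∧ (j.val + 1) % m ≠ i.val
  symm := ⟨fun i j h => ⟨h.1.symm, h.2.2.1, h.2.1, h.2.2.2.2, h.2.2.2.1⟩⟩
  loopless := ⟨fun i h => h.1 rfl⟩

/-- The star on `[n]` with edges `{i, n}` for `1 ≤ i ≤ n - 3`
(in the `0`-indexed picture: edges `{i, n-1}` for `i ≤ n - 4`). -/
def starF (n : ℕ) : SimpleGraph (Fin n) :=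
  SimpleGraph.fromRel (fun i j => i.val + 4 ≤ n ∧ j.val = n - 1)

/-- `AgreeOrder n s i j t` : the degree-`s` monomials with ascending (0-indexed)
index sequences `i` and `j` agree in order `t`. -/
def AgreeOrder (n s : ℕ) (i j : ℕ → Fin n) (t : ℕ) : Prop :=
  if t = 0 then j (s - 1) < i (s - 1)
  else (∀ l, s - t ≤ l → l ≤ s - 1 → i l = j l) ∧ i (s - t - 1) ≠ j (s - t - 1)
/-- generators of the square -/
def sqGen {n : ℕ} (H : SimpleGraph (Fin n)) : Set (Fin n →₀ ℕ) :=
  {d | ∃ a b c e, H.Adj a b ∧ H.Adj c e ∧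
    d = Finsupp.single a 1 + Finsupp.single b 1 + (Finsupp.single c 1 + Finsupp.single e 1)}

theorem sqGen_finite {n : ℕ} (H : SimpleGraph (Fin n)) : (sqGen H).Finite := by
  refine (Set.finite_range (fun q : Fin n × Fin n × Fin n × Fin n =>
    (Finsupp.single q.1 1 + Finsupp.single q.2.1 1 +
      (Finsupp.single q.2.2.1 1 + Finsupp.single q.2.2.2 1) : Fin n →₀ ℕ))).subset ?_
  rintro d ⟨a, b, c, e, -, -, rfl⟩
  exact ⟨(a, b, c, e), rfl⟩

theorem sqGen_degree {n : ℕ} (H : SimpleGraph (Fin n)) {d} (h : d ∈ sqGen H) :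
    Finsupp.degree d = 4 := by
  obtain ⟨a, b, c, e, -, -, rfl⟩ := h
  simp [map_add]

theorem edgeIdeal_sq (K : Type*) [Field K] {n : ℕ} (H : SimpleGraph (Fin n)) :
    (edgeIdeal K H) ^ 2 = Ideal.span ((fun s => monomial s (1 : K)) '' sqGen H) := by
  rw [pow_two, edgeIdeal, Ideal.span_mul_span']
  congr 1
  ext p
  simp only [Set.mem_mul, Set.mem_setOf_eq, Set.mem_image, sqGen]
  constructor
  · rintro ⟨_, ⟨a, b, hab, rfl⟩, _, ⟨c, e, hce, rfl⟩, rfl⟩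
    exact ⟨_, ⟨a, b, c, e, hab, hce, rfl⟩, by simp [X, monomial_mul]⟩
  · rintro ⟨_, ⟨a, b, c, e, hab, hce, rfl⟩, rfl⟩
    exact ⟨_, ⟨a, b, hab, rfl⟩, _, ⟨c, e, hce, rfl⟩, by simp [X, monomial_mul]⟩

theorem eq_of_le_degree {n : ℕ} {d e : Fin n →₀ ℕ} (h : e ≤ d)
    (hd : Finsupp.degree d = Finsupp.degree e) : e = d := by
  obtain ⟨f, rfl⟩ := le_iff_exists_add.1 h
  rw [map_add] at hd
  have : Finsupp.degree f = 0 := by omega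
  rw [Finsupp.degree_eq_zero_iff] at this
  simp [this]

theorem isMinGen_sq (K : Type*) [Field K] {n : ℕ} (H : SimpleGraph (Fin n)) (d : Fin n →₀ ℕ) :
    IsMinGen ((edgeIdeal K H) ^ 2) d ↔ d ∈ sqGen H := by
  have key : ∀ d : Fin n →₀ ℕ, monomial d (1 : K) ∈ (edgeIdeal K H) ^ 2 ↔
      ∃ e ∈ sqGen H, e ≤ d := by
    intro d
    classical
    rw [edgeIdeal_sq, mem_ideal_span_monomial_image]
    simp [support_monomial]
  unfold IsMinGen
  simp only [key]
  constructor
  · rintro ⟨⟨e, he, hed⟩, h⟩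
    by_cases hne : e = d
    · exact hne ▸ he
    · exact absurd ⟨e, he, le_rfl⟩ (h e hed hne)
  · intro hd
    refine ⟨⟨d, hd, le_rfl⟩, ?_⟩
    rintro e hed hne ⟨f, hf, hfe⟩
    have := eq_of_le_degree (hfe.trans hed) (by rw [sqGen_degree H hd, sqGen_degree H hf])
    subst this
    exact hne (le_antisymm hed hfe)

theorem linQuot_of_exchange (K : Type*) [Field K] {n : ℕ} (L : List (Fin n →₀ ℕ))
    (h : ∀ i k : Fin L.length, k < i → ∃ v : Fin n, L.get i v < L.get k v ∧
      ∃ l : Fin L.length, l < i ∧ L.get l ≤ L.get i + Finsupp.single v 1) :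
    IsLinQuotOrder K L := by
  classical
  intro i _
  refine ⟨{v | ∃ l : Fin L.length, l < i ∧ L.get l ≤ L.get i + Finsupp.single v 1}, ?_⟩
  have hset : {m : MvPolynomial (Fin n) K |
          ∃ k : Fin L.length, k.val < i.val ∧ m = monomial (L.get k) 1} =
      (fun s => monomial s (1 : K)) '' {d | ∃ k : Fin L.length, k < i ∧ d = L.get k} := by
    ext m
    constructor
    · rintro ⟨k, hk, rfl⟩
      exact ⟨_, ⟨k, hk, rfl⟩, rfl⟩
    · rintro ⟨_, ⟨k, hk, rfl⟩, rfl⟩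
      exact ⟨k, hk, rfl⟩
  rw [hset]
  apply le_antisymm
  · intro f hf
    rw [Ideal.mem_colon_span_singleton, mem_ideal_span_monomial_image] at hf
    refine mem_ideal_span_X_image.2 ?_
    intro u hu
    obtain ⟨_, ⟨k, hk, rfl⟩, hle⟩ := hf (u + L.get i) (by
      rw [mem_support_iff, coeff_mul_monomial, mul_one]
      exact mem_support_iff.1 hu)
    obtain ⟨v, hv, hl⟩ := h i k hk
    refine ⟨v, hl, ?_⟩
    have := hle v
    rw [Finsupp.add_apply] at this
    omega
  · rw [Ideal.span_le]
    rintro _ ⟨v, ⟨l, hl, hle⟩, rfl⟩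
    rw [SetLike.mem_coe, Ideal.mem_colon_span_singleton, mem_ideal_span_monomial_image]
    intro u hu
    have : (X v * monomial (L.get i) 1 : MvPolynomial (Fin n) K) =
        monomial (L.get i + Finsupp.single v 1) 1 := by
      rw [X, monomial_mul, add_comm, one_mul]
    dsimp only at hu
    rw [this, support_monomial] at hu
    simp at hu
    subst hu
    exact ⟨_, ⟨l, hl, rfl⟩, hle⟩

theorem hasLinQuot_of_key (K : Type*) [Field K] {n : ℕ} (H : SimpleGraph (Fin n))
    {α : Type*} [LinearOrder α] (key : (Fin n →₀ ℕ) → α)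
    (h : ∀ M ∈ sqGen H, ∀ N ∈ sqGen H, N ≠ M → key N ≤ key M → ∃ v, M v < N v ∧
      ∃ M' ∈ sqGen H, M' ≤ M + Finsupp.single v 1 ∧ (key M' < key M ∨ M' = N)) :
    HasLinearQuotients ((edgeIdeal K H) ^ 2) := by
  classical
  right
  set L0 := (sqGen_finite H).toFinset.toList with hL0
  set L := L0.mergeSort (fun a b => decide (key a ≤ key b)) with hL
  have hperm : L.Perm L0 := List.mergeSort_perm _ _
  have hnd : L.Nodup := hperm.nodup_iff.2 (Finset.nodup_toList _)
  have hmem : ∀ d, d ∈ L ↔ d ∈ sqGen H := by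
    intro d; rw [hperm.mem_iff, hL0]; simp
  have hpw : L.Pairwise (fun a b => key a ≤ key b) := by
    have := List.pairwise_mergeSort (le := fun a b => decide (key a ≤ key b))
      (by intro a b c; simp; exact le_trans) (by intro a b; simp; exact le_total _ _) L0
    simpa using this
  refine ⟨L, hnd, fun d => by rw [hmem, isMinGen_sq], linQuot_of_exchange K L ?_⟩
  have hmono : ∀ k i : Fin L.length, k < i → key (L.get k) ≤ key (L.get i) :=
    fun k i hki => List.pairwise_iff_get.1 hpw k i hki
  intro i k hki
  obtain ⟨v, hv, M', hM', hle, hor⟩ := h (L.get i) ((hmem _).1 (L.get_mem i)) (L.get k)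
    ((hmem _).1 (L.get_mem k))
    (fun heq => hki.ne (List.nodup_iff_injective_get.1 hnd heq)) (hmono k i hki)
  refine ⟨v, hv, ?_⟩
  rcases hor with hlt | rfl
  · obtain ⟨l, rfl⟩ := List.get_of_mem ((hmem _).2 hM')
    refine ⟨l, ?_, hle⟩
    by_contra hcon
    rcases (not_lt.1 hcon).lt_or_eq with h1 | h1
    · exact absurd (hmono _ _ h1) (not_le.2 hlt)
    · subst h1; exact lt_irrefl _ hlt
  · exact ⟨k, hki, hle⟩

/-- exponent vector of a product of four variables -/
def qv {n : ℕ} (a b c e : Fin n) : Fin n →₀ ℕ :=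
  Finsupp.single a 1 + Finsupp.single b 1 + (Finsupp.single c 1 + Finsupp.single e 1)

theorem qv_apply {n : ℕ} (a b c e v : Fin n) :
    qv a b c e v = (if a = v then 1 else 0) + (if b = v then 1 else 0) +
      ((if c = v then 1 else 0) + (if e = v then 1 else 0)) := by
  simp [qv, Finsupp.single_apply]

theorem qv_support {n : ℕ} (a b c e : Fin n) : (qv a b c e).support = {a, b, c, e} := by
  ext v
  rw [Finsupp.mem_support_iff, qv_apply]
  simp only [Finset.mem_insert, Finset.mem_singleton]
  split_ifs <;> simp_all <;> grind

theorem qv_distinct {n : ℕ} {a b c e : Fin n} (h : ({a, b, c, e} : Finset (Fin n)).card = 4)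
    (v : Fin n) : qv a b c e v = if v ∈ ({a, b, c, e} : Finset (Fin n)) then 1 else 0 := by
  have h1 : a ∉ ({b, c, e} : Finset (Fin n)) := by
    intro hm
    rw [Finset.insert_eq_of_mem hm] at h
    have := Finset.card_le_three (a := b) (b := c) (c := e); omega
  rw [Finset.card_insert_of_notMem h1] at h
  have h2 : b ∉ ({c, e} : Finset (Fin n)) := by
    intro hm
    rw [Finset.insert_eq_of_mem hm] at h
    have := Finset.card_le_two (a := c) (b := e); omega
  rw [Finset.card_insert_of_notMem h2] at h
  have h3 : c ≠ e := by
    rintro rfl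
    simp at h
  simp only [Finset.mem_insert, Finset.mem_singleton] at *
  rw [qv_apply]
  grind

theorem shape {n : ℕ} (H : SimpleGraph (Fin n)) {M : Fin n →₀ ℕ} (hM : M ∈ sqGen H) :
    (M.support.card = 4 ∧ (∀ v, M v = if v ∈ M.support then 1 else 0)) ∨
    (M.support.card = 3 ∧ ∃ a b c, H.Adj a b ∧ H.Adj a c ∧ b ≠ c ∧ M = qv a b a c) ∨
    (M.support.card = 2 ∧ ∃ a b, H.Adj a b ∧ M = qv a b a b) := by
  obtain ⟨a, b, c, e, hab, hce, rfl⟩ := hM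
  change ((qv a b c e).support.card = 4 ∧ (∀ v, qv a b c e v = _)) ∨
    ((qv a b c e).support.card = 3 ∧ ∃ a' b' c', H.Adj a' b' ∧ H.Adj a' c' ∧ b' ≠ c' ∧
      qv a b c e = _) ∨ ((qv a b c e).support.card = 2 ∧ ∃ a' b', H.Adj a' b' ∧ qv a b c e = _)
  have key : ∀ a b e, H.Adj a b → H.Adj a e →
    ((qv a b a e).support.card = 3 ∧ ∃ a' b' c', H.Adj a' b' ∧ H.Adj a' c' ∧ b' ≠ c' ∧
      qv a b a e = qv a' b' a' c') ∨
    ((qv a b a e).support.card = 2 ∧ ∃ a' b', H.Adj a' b' ∧ qv a b a e = qv a' b' a' b') := by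
    intro a b e hab hae
    have h1 := hab.ne
    have h2 := hae.ne
    by_cases h : b = e
    · subst h
      right
      refine ⟨?_, a, b, hab, rfl⟩
      rw [qv_support]
      have : ({a, b, a, b} : Finset (Fin n)) = {a, b} := by grind
      rw [this, Finset.card_pair h1]
    · left
      refine ⟨?_, a, b, e, hab, hae, h, rfl⟩
      rw [qv_support]
      have : ({a, b, a, e} : Finset (Fin n)) = {a, b, e} := by grind
      rw [this, Finset.card_eq_three]
      exact ⟨a, b, e, h1, h2, h, rfl⟩
  by_cases hac : a = c
  · subst hac; exact Or.inr (key a b e hab hce)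
  by_cases hae : a = e
  · subst hae
    have : qv a b c a = qv a b a c := by unfold qv; abel
    rw [this]; exact Or.inr (key a b c hab hce.symm)
  by_cases hbc : b = c
  · subst hbc
    have : qv a b b e = qv b a b e := by unfold qv; abel
    rw [this]; exact Or.inr (key b a e hab.symm hce)
  by_cases hbe : b = e
  · subst hbe
    have : qv a b c b = qv b a b c := by unfold qv; abel
    rw [this]; exact Or.inr (key b a c hab.symm hce.symm)
  left
  have hcard : ({a, b, c, e} : Finset (Fin n)).card = 4 := by
    rw [Finset.card_insert_of_notMem (by simp [hac, hae, hab.ne]),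
      Finset.card_insert_of_notMem (by simp [hbc, hbe]), Finset.card_pair hce.ne]
  refine ⟨by rw [qv_support]; exact hcard, fun v => ?_⟩
  change _ = if v ∈ (qv a b c e).support then 1 else 0
  rw [qv_support]
  exact qv_distinct hcard v

/-- the sorting key -/
def skey {n : ℕ} (M : Fin n →₀ ℕ) : ℕ ×ₗ (Colex (Finset (Fin n)))ᵒᵈ :=
  toLex (4 - M.support.card, OrderDual.toDual (toColex M.support))

theorem skey_lt {n : ℕ} {M N : Fin n →₀ ℕ} (h : N.support.card ≤ 4)
    (h1 : M.support.card < N.support.card) : skey N < skey M := by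
  rw [skey, skey, Prod.Lex.toLex_lt_toLex]
  left; simp; omega

theorem skey_le {n : ℕ} {M N : Fin n →₀ ℕ} (h : M.support.card ≤ 4)
    (h1 : skey N ≤ skey M) : M.support.card ≤ N.support.card := by
  rw [skey, skey, Prod.Lex.toLex_le_toLex] at h1
  simp at h1
  omega

set_option maxHeartbeats 1000000 in
theorem exchange {n : ℕ} (H : SimpleGraph (Fin n)) (T : Finset (Fin n)) (hT3 : T.card = 3)
    (hT : ∀ i ∈ T, ∀ j ∈ T, ¬ H.Adj i j)
    (hP2 : ∀ A : Finset (Fin n), A.card = 4 → ¬ T ⊆ A →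
      ∃ a b c e, H.Adj a b ∧ H.Adj c e ∧ A = {a, b, c, e})
    (hP3 : ∀ a b x y, H.Adj a b → H.Adj x y → a ≠ x → a ≠ y → b ≠ x → b ≠ y →
      H.Adj a x ∨ H.Adj a y ∨ H.Adj b x ∨ H.Adj b y) :
    ∀ M ∈ sqGen H, ∀ N ∈ sqGen H, N ≠ M → skey N ≤ skey M → ∃ v, M v < N v ∧
      ∃ M' ∈ sqGen H, M' ≤ M + Finsupp.single v 1 ∧ (skey M' < skey M ∨ M' = N) := by
  have hP2' : ∀ A : Finset (Fin n), A.card = 4 → ¬ T ⊆ A → ∃ M' ∈ sqGen H, M'.support = A ∧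
      ∀ v, M' v = if v ∈ A then 1 else 0 := by
    intro A hA hTA
    obtain ⟨a, b, c, e, hab, hce, rfl⟩ := hP2 A hA hTA
    exact ⟨qv a b c e, ⟨a, b, c, e, hab, hce, rfl⟩, qv_support _ _ _ _, qv_distinct hA⟩
  have hP1 : ∀ N ∈ sqGen H, ¬ T ⊆ N.support := by
    rintro N ⟨a, b, c, e, hab, hce, rfl⟩ hsub
    change T ⊆ (qv a b c e).support at hsub
    rw [qv_support] at hsub
    have : ∃ x y, T ⊆ {x, y} := by
      by_cases h1 : a ∈ T
      · have h2 : b ∉ T := fun h => hT a h1 b h hab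
        by_cases h3 : c ∈ T
        · have h4 : e ∉ T := fun h => hT c h3 e h hce
          exact ⟨a, c, by grind⟩
        · exact ⟨a, e, by grind⟩
      · by_cases h3 : c ∈ T
        · have h4 : e ∉ T := fun h => hT c h3 e h hce
          exact ⟨b, c, by grind⟩
        · exact ⟨b, e, by grind⟩
    obtain ⟨x, y, hxy⟩ := this
    have h1 := Finset.card_le_card hxy
    have h2 := Finset.card_le_two (a := x) (b := y)
    omega
  intro M hM N hN hne hkey
  rcases shape H hM with ⟨hMc, hMv⟩ | ⟨hMc, a, b, c, hab, hac, hbc, rfl⟩ | ⟨hMc, a, b, hab, rfl⟩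
  · -- squarefree
    clear hP3 hP2
    have hNc := skey_le (by omega) hkey
    rcases shape H hN with ⟨hNc', hNv⟩ | ⟨hNc', -⟩ | ⟨hNc', -⟩
    rotate_left
    · omega
    · omega
    have hsne : M.support ≠ N.support := by
      intro h
      apply hne
      ext v
      rw [hMv, hNv, h]
    have hlt : toColex M.support < toColex N.support := by
      rw [skey, skey, Prod.Lex.toLex_le_toLex] at hkey
      simp only [hMc, hNc', lt_irrefl, false_or, true_and, OrderDual.toDual_le_toDual] at hkey
      exact lt_of_le_of_ne hkey (fun h => hsne (by simpa using h))
    obtain ⟨v, hvN, hvM, hw⟩ := Finset.Colex.lt_iff_exists_forall_lt.1 hlt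
    simp only [ofColex_toColex] at hvN hvM hw
    have hTN := hP1 N hN
    have hex : ∃ w ∈ M.support, w ∉ N.support ∧ ¬ T ⊆ insert v (M.support.erase w) := by
      by_cases h : T ⊆ insert v M.support
      · obtain ⟨t, htT, htN⟩ := Finset.not_subset.1 hTN
        have := h htT
        refine ⟨t, by grind, htN, ?_⟩
        intro h'
        have := h' htT
        grind
      · have : ∃ w ∈ M.support, w ∉ N.support := by
          by_contra hcon
          push Not at hcon
          exact hsne (Finset.eq_of_subset_of_card_le hcon (by omega))
        obtain ⟨w, hwM, hwN⟩ := this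
        exact ⟨w, hwM, hwN, fun h' => h (h'.trans (Finset.insert_subset_insert _
          (Finset.erase_subset _ _)))⟩
    obtain ⟨w, hwM, hwN, hTA⟩ := hex
    have hAc : (insert v (M.support.erase w)).card = 4 := by
      rw [Finset.card_insert_of_notMem (by grind), Finset.card_erase_of_mem hwM, hMc]
    obtain ⟨M', hM', hs, hv'⟩ := hP2' _ hAc hTA
    refine ⟨v, ?_, M', hM', ?_, Or.inl ?_⟩
    · rw [hMv, hNv, if_neg hvM, if_pos hvN]; omega
    · intro x
      rw [Finsupp.add_apply, hv', hMv, Finsupp.single_apply]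
      grind
    · rw [skey, skey, Prod.Lex.toLex_lt_toLex, hs, hAc, hMc]
      right
      refine ⟨rfl, ?_⟩
      rw [OrderDual.toDual_lt_toDual, Finset.Colex.lt_iff_exists_forall_lt]
      simp only [ofColex_toColex]
      refine ⟨v, by simp, hvM, ?_⟩
      intro b hb hb'
      have : b = w := by grind
      subst this
      exact hw b hwM hwN
  · -- one square
    clear hP3 hP2
    have hNc := skey_le (by omega) hkey
    have h1 := hab.ne
    have h2 := hac.ne
    by_cases h : ∃ v ∈ N.support, v ∉ ({a, b, c} : Finset (Fin n)) ∧
        ¬ T ⊆ ({v, a, b, c} : Finset (Fin n))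
    · obtain ⟨v, hvN, hv, hTv⟩ := h
      have hAc : ({v, a, b, c} : Finset (Fin n)).card = 4 := by
        rw [Finset.card_insert_of_notMem hv, Finset.card_eq_three.2 ⟨a, b, c, h1, h2, hbc, rfl⟩]
      obtain ⟨M', hM', hs, hv'⟩ := hP2' _ hAc hTv
      clear hP2' hP1 hT
      refine ⟨v, ?_, M', hM', ?_, Or.inl ?_⟩
      · have := Finsupp.mem_support_iff.1 hvN
        rw [qv_apply]
        grind
      · intro x
        rw [Finsupp.add_apply, hv', qv_apply, Finsupp.single_apply]
        grind
      · apply skey_lt <;> rw [hs] <;> omega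
    push Not at h
    clear hP2'
    have hTabc : ∀ v, T ⊆ ({v, a, b, c} : Finset (Fin n)) → v ∉ ({a, b, c} : Finset (Fin n)) →
        a ∉ T ∧ T = {v, b, c} := by
      intro v hv hv2
      have haT : a ∉ T := by
        intro haT
        have hb : b ∉ T := fun h => hT a haT b h hab
        have hc : c ∉ T := fun h => hT a haT c h hac
        have hsub : T ⊆ {v, a} := by clear hT hP1 h; grind
        have h1 := Finset.card_le_card hsub
        have h2 := Finset.card_le_two (a := v) (b := a)
        omega
      refine ⟨haT, ?_⟩
      apply Finset.eq_of_subset_of_card_le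
      · clear hT hP1 h; grind
      · rw [hT3]; exact Finset.card_le_three
    by_cases h' : ∃ v ∈ N.support, v ∉ ({a, b, c} : Finset (Fin n))
    · obtain ⟨v, hvN, hv⟩ := h'
      obtain ⟨haT, hTe⟩ := hTabc v (h v hvN hv) hv
      have hsub : N.support ⊆ {v, a, b, c} := by
        intro u hu
        by_contra hcon
        have hu' : u ∉ ({a, b, c} : Finset (Fin n)) := by grind
        have e1 := (hTabc u (h u hu hu') hu').2
        have e2 : v ∈ T := by rw [hTe]; simp
        rw [e1] at e2
        clear hT hP1 h hTabc e1 hTe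
        grind
      rcases shape H hN with ⟨hNc', hNv⟩ | ⟨hNc', a', b', c', hab', hac', hbc', rfl⟩ | ⟨hNc', -⟩
      · exfalso
        apply hP1 N hN
        have : N.support = {v, a, b, c} :=
          Finset.eq_of_subset_of_card_le hsub (by rw [hNc']; exact Finset.card_le_four)
        rw [this]
        exact h v hvN hv
      · rw [qv_support] at hsub hvN
        have hmem : ∀ x ∈ ({a', b', a', c'} : Finset (Fin n)), x = a ∨ x ∈ T := by
          intro x hx; have := hsub hx; rw [hTe]; clear hT hP1 h hTabc; grind
        have ha' : a' = a := by
          rcases hmem a' (by simp) with h | h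
          · exact h
          · have hb := hmem b' (by simp)
            have hc := hmem c' (by simp)
            have e1 := hT a' h b'
            have e2 := hT a' h c'
            have hb' : b' = a := hb.resolve_right (fun hh => e1 hh hab')
            have hc' : c' = a := hc.resolve_right (fun hh => e2 hh hac')
            exact absurd (hb'.trans hc'.symm) hbc'
        subst ha'
        clear hT hP1 h hTabc
        refine ⟨v, ?_, _, hN, ?_, Or.inr rfl⟩
        · rw [qv_apply, qv_apply]; grind
        · intro x
          have hb := hmem b' (by simp)
          have hc := hmem c' (by simp)
          have := hab'.ne
          have := hac'.ne
          rw [hTe] at hb hc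
          rw [Finsupp.add_apply, qv_apply, qv_apply, Finsupp.single_apply]
          grind
      · omega
    · push Not at h'
      have hcard : N.support.card ≤ 3 := (Finset.card_le_card h').trans Finset.card_le_three
      rcases shape H hN with ⟨hNc', -⟩ | ⟨hNc', a', b', c', hab', hac', hbc', rfl⟩ | ⟨hNc', -⟩
      · omega
      · rw [qv_support] at h'
        have e1 := h' a' (by simp)
        have e2 := h' b' (by simp)
        have e3 := h' c' (by simp)
        have := hab'.ne
        have := hac'.ne
        simp only [Finset.mem_insert, Finset.mem_singleton] at e1 e2 e3
        clear hT hP1 h hTabc h'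
        have hne' : a' ≠ a := by
          rintro rfl
          apply hne
          ext x
          rw [qv_apply, qv_apply]
          grind
        refine ⟨a', ?_, _, hN, ?_, Or.inr rfl⟩
        · rw [qv_apply, qv_apply]; grind
        · intro x
          rw [Finsupp.add_apply, qv_apply, qv_apply, Finsupp.single_apply]
          grind
      · omega
  · -- two squares
    clear hP2 hP2' hP1 hT
    by_cases h : ∃ v ∈ N.support, v ≠ a ∧ v ≠ b ∧ (H.Adj a v ∨ H.Adj b v)
    · obtain ⟨v, hvN, hva, hvb, hadj⟩ := h
      have key : ∀ a b, H.Adj a b → v ≠ a → v ≠ b → H.Adj a v →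
          (qv a b a v).support.card = 3 := by
        intro a b hab hva hvb hav
        have : ({a, b, a, v} : Finset (Fin n)) = {a, b, v} := by grind
        rw [qv_support, this]
        exact Finset.card_eq_three.2 ⟨a, b, v, hab.ne, hva.symm, hvb.symm, rfl⟩
      refine ⟨v, ?_, ?_⟩
      · have := Finsupp.mem_support_iff.1 hvN
        rw [qv_apply]
        grind
      rcases hadj with hadj | hadj
      · have hk := key a b hab hva hvb hadj
        refine ⟨qv a b a v, ⟨a, b, a, v, hab, hadj, rfl⟩, ?_, Or.inl (skey_lt (by omega) (by omega))⟩
        have : qv a b a b + Finsupp.single v 1 = qv a b a v + Finsupp.single b 1 := by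
          unfold qv; abel
        rw [this]; exact le_self_add
      · have hk := key b a hab.symm hvb hva hadj
        refine ⟨qv b a b v, ⟨b, a, b, v, hab.symm, hadj, rfl⟩, ?_,
          Or.inl (skey_lt (by omega) (by omega))⟩
        have : qv a b a b + Finsupp.single v 1 = qv b a b v + Finsupp.single a 1 := by
          unfold qv; abel
        rw [this]; exact le_self_add
    · exfalso
      push Not at h
      obtain ⟨p, q, r, s, hpq, hrs, rfl⟩ := hN
      change qv p q r s ≠ _ at hne
      change ∀ v ∈ (qv p q r s).support, _ at h
      rw [qv_support] at h
      have hedge : ∀ x y, H.Adj x y → x ∈ ({p, q, r, s} : Finset (Fin n)) →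
          y ∈ ({p, q, r, s} : Finset (Fin n)) → (x = a ∧ y = b) ∨ (x = b ∧ y = a) := by
        intro x y hxy hx hy
        have hx' := h x hx
        have hy' := h y hy
        have e1 := hxy.ne
        have e2 := hxy.symm
        have e3 := hP3 a b x y hab hxy
        have e4 := hab.ne
        grind
      have e1 := hedge p q hpq (by simp) (by simp)
      have e2 := hedge r s hrs (by simp) (by simp)
      apply hne
      ext x
      rw [qv_apply, qv_apply]
      grind

theorem adj_iff (n : ℕ) (hn : 6 ≤ n) (i j : Fin n) (hij : i < j) :
    (((anticycle n).deleteEdges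
            {s(⟨n - 3, by omega⟩, ⟨n - 1, by omega⟩), s(⟨0, by omega⟩, ⟨n - 2, by omega⟩)}) ⊔
          SimpleGraph.fromEdgeSet {s(⟨0, by omega⟩, ⟨n - 1, by omega⟩)}).Adj i j ↔
    (i.val + 1 < j.val ∧ ¬ (i.val = 0 ∧ j.val = n - 2) ∧ ¬ (i.val = n - 3 ∧ j.val = n - 1)) := by
  have hj := j.2
  have hij' : i.val < j.val := hij
  have h1 : (i.val + 1) % n = i.val + 1 := Nat.mod_eq_of_lt (by omega)
  have h2 : (j.val + 1) % n = if j.val = n - 1 then 0 else j.val + 1 := by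
    split_ifs with h
    · rw [h, Nat.sub_add_cancel (by omega), Nat.mod_self]
    · exact Nat.mod_eq_of_lt (by omega)
  simp only [SimpleGraph.sup_adj, SimpleGraph.deleteEdges_adj, anticycle,
    SimpleGraph.fromEdgeSet_adj, Set.mem_insert_iff, Set.mem_singleton_iff, Sym2.eq_iff,
    Fin.ext_iff, h1, h2, ne_eq]
  split_ifs <;> omega

theorem main_of_adj (K : Type*) [Field K] (n : ℕ) (hn : 6 ≤ n) (H : SimpleGraph (Fin n))
    (hadj : ∀ i j : Fin n, i < j → (H.Adj i j ↔
      (i.val + 1 < j.val ∧ ¬ (i.val = 0 ∧ j.val = n - 2) ∧ ¬ (i.val = n - 3 ∧ j.val = n - 1)))) :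
    HasLinearQuotients ((edgeIdeal K H) ^ 2) := by
  refine hasLinQuot_of_key K H skey (exchange H
    {⟨n - 3, by omega⟩, ⟨n - 2, by omega⟩, ⟨n - 1, by omega⟩} ?_ ?_ ?_ ?_)
  · refine Finset.card_eq_three.2 ⟨_, _, _, ?_, ?_, ?_, rfl⟩ <;> simp [Fin.ext_iff] <;> omega
  · have : ∀ i j : Fin n, i < j → n - 3 ≤ i.val → ¬ H.Adj i j := by
      intro i j hij hi h
      have := (hadj i j hij).1 h
      have := j.2
      omega
    intro i hi j hj h
    have hi' : n - 3 ≤ i.val := by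
      simp [Fin.ext_iff] at hi; omega
    have hj' : n - 3 ≤ j.val := by
      simp [Fin.ext_iff] at hj; omega
    rcases lt_or_gt_of_ne h.ne with hl | hl
    · exact this i j hl hi' h
    · exact this j i hl hj' h.symm
  · intro A hA hTA
    obtain ⟨x, y, z, t, hxy, hyz, hzt, rfl⟩ : ∃ x y z t : Fin n, x < y ∧ y < z ∧ z < t ∧
        A = {x, y, z, t} := by
      refine ⟨A.orderEmbOfFin hA 0, A.orderEmbOfFin hA 1, A.orderEmbOfFin hA 2,
        A.orderEmbOfFin hA 3, by simp, by simp, by simp, ?_⟩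
      ext v
      have := Finset.ext_iff.1 (A.image_orderEmbOfFin_univ hA) v
      rw [← this]
      simp only [Finset.mem_image, Finset.mem_univ, true_and, Finset.mem_insert,
        Finset.mem_singleton]
      constructor
      · rintro ⟨i, rfl⟩
        fin_cases i <;> simp
      · rintro (h | h | h | h) <;> exact ⟨_, h.symm⟩
    have hT' : ¬ (y.val = n - 3 ∧ z.val = n - 2 ∧ t.val = n - 1) := by
      rintro ⟨h1, h2, h3⟩
      apply hTA
      intro u hu
      simp only [Finset.mem_insert, Finset.mem_singleton, Fin.ext_iff] at hu ⊢
      omega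
    have ht := t.2
    have hxy' : x.val < y.val := hxy
    have hyz' : y.val < z.val := hyz
    have hzt' : z.val < t.val := hzt
    by_cases hc : H.Adj x z ∧ H.Adj y t
    · exact ⟨x, z, y, t, hc.1, hc.2, by grind⟩
    · refine ⟨x, t, y, z, ?_, ?_, by grind⟩
      · rw [hadj _ _ (hxy.trans hyz), hadj _ _ (hyz.trans hzt)] at hc
        rw [hadj _ _ (hxy.trans (hyz.trans hzt))]
        omega
      · rw [hadj _ _ (hxy.trans hyz), hadj _ _ (hyz.trans hzt)] at hc
        rw [hadj _ _ hyz]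
        omega
  · have main : ∀ a b x y, a < b → x < y → H.Adj a b → H.Adj x y → a ≠ x → a ≠ y → b ≠ x →
        b ≠ y → H.Adj a x ∨ H.Adj a y ∨ H.Adj b x ∨ H.Adj b y := by
      have hA : ∀ i j : Fin n, i ≠ j → ¬ H.Adj i j →
          ¬ (i.val + 1 < j.val ∧ ¬ (i.val = 0 ∧ j.val = n - 2) ∧
            ¬ (i.val = n - 3 ∧ j.val = n - 1)) ∧
          ¬ (j.val + 1 < i.val ∧ ¬ (j.val = 0 ∧ i.val = n - 2) ∧
            ¬ (j.val = n - 3 ∧ i.val = n - 1)) := by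
        intro i j hij h
        rcases lt_or_gt_of_ne hij with hl | hl
        · rw [hadj i j hl] at h
          have : i.val < j.val := hl
          exact ⟨h, by omega⟩
        · rw [H.adj_comm, hadj j i hl] at h
          have : j.val < i.val := hl
          exact ⟨by omega, h⟩
      intro a b x y hab hxy h1 h2 n1 n2 n3 n4
      by_contra hcon
      push Not at hcon
      obtain ⟨c1, c2, c3, c4⟩ := hcon
      have c1 := hA _ _ n1 c1
      have c2 := hA _ _ n2 c2
      have c3 := hA _ _ n3 c3
      have c4 := hA _ _ n4 c4
      have h1 := (hadj _ _ hab).1 h1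
      have h2 := (hadj _ _ hxy).1 h2
      have := a.2
      have := b.2
      have := x.2
      have := y.2
      rw [ne_eq, Fin.ext_iff] at n1 n2 n3 n4
      omega
    intro a b x y h1 h2 n1 n2 n3 n4
    rcases lt_or_gt_of_ne h1.ne with l1 | l1 <;> rcases lt_or_gt_of_ne h2.ne with l2 | l2
    · exact main a b x y l1 l2 h1 h2 n1 n2 n3 n4
    · have := main a b y x l1 l2 h1 h2.symm n2 n1 n4 n3
      tauto
    · have := main b a x y l1 l2 h1.symm h2 n3 n4 n1 n2
      tauto
    · have := main b a y x l1 l2 h1.symm h2.symm n4 n3 n2 n1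
      tauto


/-- Corollary `cor2`: for `n ≥ 6`, the graph `H_n` obtained from the anticycle on `[n]`
by removing the edges `{n-2, n}` and `{1, n-1}` and adding the edge `{1, n}` has
`I_{H_n}^2` with linear quotients. -/
theorem Hn_square_linear_quotients
    (K : Type*) [Field K] (n : ℕ) (hn : 6 ≤ n) :
    HasLinearQuotients
      ((edgeIdeal K
        (((anticycle n).deleteEdges
            {s(⟨n - 3, by omega⟩, ⟨n - 1, by omega⟩), s(⟨0, by omega⟩, ⟨n - 2, by omega⟩)}) ⊔
          SimpleGraph.fromEdgeSet {s(⟨0, by omega⟩, ⟨n - 1, by omega⟩)})) ^ 2) := by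
  exact main_of_adj K n hn _ (adj_iff n hn)

end
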